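/- arXiv:1806.03587 — 2 statements merged into one kernel-verified Lean document; each statement's English description precedes it below -/
import Mathlib

section
/- Truncation preserves viscosity subsolutions: Let Ω be a domain in ℝ^N with N ≥ 2, let H : Ω → ℝ be locally Lipschitz continuous, let v be an upper semicontinuous viscosity subsolution of M(v) = NH in Ω, let x₀ ∈ Ω and R > 0 with cl(B(x₀,R)) ⊂ Ω and H ≤ 1/R on cl(B(x₀,R)), and let K ∈ ℝ. Then the function v_R(x) := max{ v(x), −K − √(R² − |x−x₀|²) } is upper semicontinuous on cl(B(x₀,R)) and is a viscosity subsolution of M(v_R) = NH in B(x₀,R). -/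
open Metric Set Filter Topology MeasureTheory

/-- The mean curvature operator `M(w) = div (Dw / sqrt (1 + |Dw|²))`,
computed as the sum of the partial derivatives of the components of the
normalized gradient field. -/
noncomputable def mcOp {N : ℕ} (w : EuclideanSpace ℝ (Fin N) → ℝ)
    (x : EuclideanSpace ℝ (Fin N)) : ℝ :=
  ∑ i : Fin N,
    fderiv ℝ (fun y => (Real.sqrt (1 + ‖gradient w y‖ ^ 2))⁻¹ * gradient w y i) x
      (EuclideanSpace.single i 1)

/-- `f` is locally Lipschitz continuous on the set `s`. -/
def LocLipschitzOn {N : ℕ} (s : Set (EuclideanSpace ℝ (Fin N)))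
    (f : EuclideanSpace ℝ (Fin N) → ℝ) : Prop :=
  ∀ x ∈ s, ∃ K : NNReal, ∃ t ∈ 𝓝[s] x, LipschitzOnWith K f t

/-- `u` is a viscosity supersolution of `M(u) = N H` on the open set `U`. -/
def IsViscositySupersol {N : ℕ} (U : Set (EuclideanSpace ℝ (Fin N)))
    (H u : EuclideanSpace ℝ (Fin N) → ℝ) : Prop :=
  ∀ φ : EuclideanSpace ℝ (Fin N) → ℝ, ContDiffOn ℝ 2 φ U →
    ∀ x ∈ U, IsLocalMinOn (fun y => u y - φ y) U x → mcOp φ x ≤ N * H x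

/-- `v` is a viscosity subsolution of `M(v) = N H` on the open set `U`. -/
def IsViscositySubsol {N : ℕ} (U : Set (EuclideanSpace ℝ (Fin N)))
    (H v : EuclideanSpace ℝ (Fin N) → ℝ) : Prop :=
  ∀ φ : EuclideanSpace ℝ (Fin N) → ℝ, ContDiffOn ℝ 2 φ U →
    ∀ x ∈ U, IsLocalMaxOn (fun y => v y - φ y) U x → mcOp φ x ≥ N * H x

/-!
The maximum of two subsolutions is a subsolution: where a test function touches the maximum from
above, it touches the larger of the two functions from above. It therefore suffices that the lower
hemisphere `w` is a subsolution in the ball. Its normalized gradient is `(x - x₀) / R`, whose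
divergence is `N / R ≥ N H`, so `w` is a classical subsolution. It is a viscosity subsolution
because the mean curvature operator is degenerate elliptic: with `W = √(1 + |Dw|²)` and
`ν = Dw / W`, one has `M(w) = W⁻¹ (tr D²w - ⟪ν, D²w ν⟫)`, which is monotone in `D²w` since
`|ν| ≤ 1`.
-/

open scoped Gradient RealInnerProductSpace

section SecondOrderCondition

variable {F : Type*} [NormedAddCommGroup F] [NormedSpace ℝ F]

lemma deriv_deriv_nonpos_of_isLocalMax {q : ℝ → ℝ} {a : ℝ} (hq : ContinuousAt q a)
    (hmax : IsLocalMax q a) : deriv (deriv q) a ≤ 0 := by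
  by_contra! hpos
  have hmin : IsLocalMin q a := isLocalMin_of_deriv_deriv_pos hpos hmax.deriv_eq_zero hq
  have hconst : q =ᶠ[𝓝 a] fun _ => q a := by
    filter_upwards [hmax, hmin] with t hle hge using le_antisymm hle hge
  have hzero : deriv (deriv q) a = 0 := by simp [hconst.deriv.deriv_eq]
  exact hpos.ne' hzero

lemma deriv_deriv_comp_add_smul {f : F → ℝ} {x : F} (hf : ContDiffAt ℝ 2 f x) (u : F) :
    deriv (deriv fun t : ℝ => f (x + t • u)) 0 = fderiv ℝ (fderiv ℝ f) x u u := by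
  have hline (t : ℝ) : HasDerivAt (fun t : ℝ => x + t • u) u t := by
    simpa using ((hasDerivAt_id t).smul_const u).const_add x
  have hline_zero : x + (0 : ℝ) • u = x := by simp
  have hderiv : deriv (fun t : ℝ => f (x + t • u)) =ᶠ[𝓝 0]
      fun t => fderiv ℝ f (x + t • u) u := by
    have htendsto : Tendsto (fun t : ℝ => x + t • u) (𝓝 0) (𝓝 x) := by
      simpa only [hline_zero] using (hline 0).continuousAt.tendsto
    filter_upwards [htendsto.eventually (hf.eventually (by simp))] with t ht
    exact ((ht.differentiableAt (by simp)).hasFDerivAt.comp_hasDerivAt t (hline t)).deriv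
  have hfderiv : HasFDerivAt (fderiv ℝ f) (fderiv ℝ (fderiv ℝ f) x) (x + (0 : ℝ) • u) := by
    rw [hline_zero]
    exact ((hf.fderiv_right (m := 1) (by norm_num)).differentiableAt (by simp)).hasFDerivAt
  have hcomp : HasDerivAt (fun t : ℝ => fderiv ℝ f (x + t • u)) (fderiv ℝ (fderiv ℝ f) x u) 0 :=
    hfderiv.comp_hasDerivAt 0 (hline 0)
  have hsecond : HasDerivAt (fun t : ℝ => fderiv ℝ f (x + t • u) u)
      (fderiv ℝ (fderiv ℝ f) x u u) 0 := by
    simpa using hcomp.clm_apply (hasDerivAt_const 0 u)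
  rw [hderiv.deriv_eq, hsecond.deriv]

lemma fderiv_fderiv_nonpos_of_isLocalMax {f : F → ℝ} {x : F} (hf : ContDiffAt ℝ 2 f x)
    (hmax : IsLocalMax f x) (u : F) : fderiv ℝ (fderiv ℝ f) x u u ≤ 0 := by
  have hline : ContinuousAt (fun t : ℝ => x + t • u) 0 := by fun_prop
  have hline_zero : x + (0 : ℝ) • u = x := by simp
  rw [← deriv_deriv_comp_add_smul hf u]
  refine deriv_deriv_nonpos_of_isLocalMax ?_ ?_
  · exact hf.continuousAt.comp_of_eq hline hline_zero
  · have hmax' : IsLocalMax f (x + (0 : ℝ) • u) := by rwa [hline_zero]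
    exact IsLocalMax.comp_continuous (b := 0) hmax' hline

lemma fderiv_eq_of_isLocalMax_sub {f g : F → ℝ} {x : F} (hf : DifferentiableAt ℝ f x)
    (hg : DifferentiableAt ℝ g x) (hmax : IsLocalMax (f - g) x) : fderiv ℝ f x = fderiv ℝ g x := by
  rw [← sub_eq_zero, ← fderiv_sub hf hg, hmax.fderiv_eq_zero]

lemma fderiv_fderiv_le_of_isLocalMax_sub {f g : F → ℝ} {x : F} (hf : ContDiffAt ℝ 2 f x)
    (hg : ContDiffAt ℝ 2 g x) (hmax : IsLocalMax (f - g) x) (u : F) :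
    fderiv ℝ (fderiv ℝ f) x u u ≤ fderiv ℝ (fderiv ℝ g) x u u := by
  have hsub : fderiv ℝ (f - g) =ᶠ[𝓝 x] fderiv ℝ f - fderiv ℝ g := by
    filter_upwards [hf.eventually (by simp), hg.eventually (by simp)] with y hfy hgy
    exact fderiv_sub (hfy.differentiableAt (by simp)) (hgy.differentiableAt (by simp))
  have hf' := (hf.fderiv_right (m := 1) (by norm_num)).differentiableAt (by simp)
  have hg' := (hg.fderiv_right (m := 1) (by norm_num)).differentiableAt (by simp)
  have hnonpos : fderiv ℝ (fderiv ℝ (f - g)) x u u ≤ 0 :=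
    fderiv_fderiv_nonpos_of_isLocalMax (hf.sub hg) hmax u
  rw [hsub.fderiv_eq, fderiv_sub hf' hg'] at hnonpos
  simpa using hnonpos

end SecondOrderCondition

section Gradient

variable {F : Type*} [NormedAddCommGroup F] [InnerProductSpace ℝ F] [CompleteSpace F]

lemma inner_fderiv_gradient (f : F → ℝ) (x u v : F) :
    ⟪fderiv ℝ (∇ f) x u, v⟫ = fderiv ℝ (fderiv ℝ f) x u v := by
  have h : fderiv ℝ (∇ f) x = _ :=
    (InnerProductSpace.toDual ℝ F).symm.toContinuousLinearEquiv.comp_fderiv (f := fderiv ℝ f)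
  simp [h]

lemma differentiableAt_gradient {f : F → ℝ} {x : F} (hf : ContDiffAt ℝ 2 f x) :
    DifferentiableAt ℝ (∇ f) x :=
  (InnerProductSpace.toDual ℝ F).symm.differentiableAt.comp x
    ((hf.fderiv_right (m := 1) (by norm_num)).differentiableAt (by simp))

end Gradient

section Trace

variable {F : Type*} [NormedAddCommGroup F] [InnerProductSpace ℝ F] [FiniteDimensional ℝ F]

lemma trace_nonneg_of_inner_nonneg {A : F →ₗ[ℝ] F} (hA : ∀ u, 0 ≤ ⟪u, A u⟫) :
    0 ≤ LinearMap.trace ℝ F A := by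
  rw [A.trace_eq_sum_inner (stdOrthonormalBasis ℝ F)]
  exact Finset.sum_nonneg fun i _ => hA _

lemma inner_le_trace_of_norm_eq_one {A : F →ₗ[ℝ] F} (hA : ∀ u, 0 ≤ ⟪u, A u⟫) {e : F}
    (he : ‖e‖ = 1) : ⟪e, A e⟫ ≤ LinearMap.trace ℝ F A := by
  have horth : Orthonormal ℝ ((↑) : ({e} : Set F) → F) := by
    simpa [orthonormal_subsingleton_iff] using he
  obtain ⟨s, b, hes, hb⟩ := horth.exists_orthonormalBasis_extension
  let i : s := ⟨e, hes rfl⟩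
  calc ⟪e, A e⟫ = ⟪b i, A (b i)⟫ := by rw [hb]
    _ ≤ ∑ j, ⟪b j, A (b j)⟫ :=
      Finset.single_le_sum (f := fun j => ⟪b j, A (b j)⟫) (fun j _ => hA _) (Finset.mem_univ i)
    _ = LinearMap.trace ℝ F A := (A.trace_eq_sum_inner b).symm

lemma inner_le_trace_of_norm_le_one {A : F →ₗ[ℝ] F} (hA : ∀ u, 0 ≤ ⟪u, A u⟫) {p : F}
    (hp : ‖p‖ ≤ 1) : ⟪p, A p⟫ ≤ LinearMap.trace ℝ F A := by
  rcases eq_or_ne p 0 with rfl | hp₀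
  · simpa using trace_nonneg_of_inner_nonneg hA
  set e : F := ‖p‖⁻¹ • p
  have hpe : p = ‖p‖ • e := (smul_inv_smul₀ (norm_ne_zero_iff.2 hp₀) p).symm
  calc ⟪p, A p⟫ = ‖p‖ ^ 2 * ⟪e, A e⟫ := by
        conv_lhs => rw [hpe]
        rw [map_smul, real_inner_smul_left, real_inner_smul_right]
        ring
    _ ≤ ⟪e, A e⟫ := mul_le_of_le_one_left (hA e) (pow_le_one₀ (norm_nonneg p) hp)
    _ ≤ LinearMap.trace ℝ F A := inner_le_trace_of_norm_eq_one hA (norm_smul_inv_norm hp₀)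

lemma trace_rankOne_comp (y z : F) (L : F →L[ℝ] F) :
    LinearMap.trace ℝ F ((InnerProductSpace.rankOne ℝ y z).comp L : F →L[ℝ] F) = ⟪z, L y⟫ := by
  rw [InnerProductSpace.rankOne_comp, InnerProductSpace.trace_rankOne,
    ContinuousLinearMap.adjoint_inner_left]

end Trace

section GraphNormalize

variable {F : Type*} [NormedAddCommGroup F] [InnerProductSpace ℝ F]

/-- The map `p ↦ p / √(1 + |p|²)`, taking the gradient of a function to the horizontal part of
the downward unit normal of its graph. -/
noncomputable def graphNormalize (p : F) : F :=
  (√(1 + ‖p‖ ^ 2))⁻¹ • p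

lemma norm_graphNormalize_lt_one (p : F) : ‖graphNormalize p‖ < 1 :=
  mem_ball_zero_iff.1 (OpenPartialHomeomorph.univUnitBall.map_source (mem_univ p))

lemma hasFDerivAt_graphNormalize (p : F) :
    HasFDerivAt graphNormalize ((√(1 + ‖p‖ ^ 2))⁻¹ • (ContinuousLinearMap.id ℝ F -
      InnerProductSpace.rankOne ℝ (graphNormalize p) (graphNormalize p))) p := by
  have hpos : 0 < 1 + ‖p‖ ^ 2 := by positivity
  have hsqrt : HasFDerivAt (fun q : F => √(1 + ‖q‖ ^ 2)) ((√(1 + ‖p‖ ^ 2))⁻¹ • innerSL ℝ p) p := by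
    refine (((hasFDerivAt_id p).norm_sq.const_add 1).sqrt hpos.ne').congr_fderiv ?_
    ext u
    simp only [id_eq, one_div, mul_inv_rev, ContinuousLinearMap.comp_id, smul_apply,
      coe_innerSL_apply, nsmul_eq_mul, Nat.cast_ofNat, smul_eq_mul]
    field_simp
  have hinv := (hasDerivAt_inv (Real.sqrt_pos.2 hpos).ne').comp_hasFDerivAt p hsqrt
  refine (hinv.smul (hasFDerivAt_id p)).congr_fderiv ?_
  ext u
  simp only [Function.comp_apply, smul_smul, neg_mul, neg_smul, id_eq, add_apply, smul_apply,
    ContinuousLinearMap.id_apply, ContinuousLinearMap.smulRight_apply, neg_apply,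
    coe_innerSL_apply, smul_eq_mul, graphNormalize, map_smul, smul_sub, sub_apply,
    InnerProductSpace.rankOne_apply]
  module

end GraphNormalize

section MeanCurvature

variable {N : ℕ} {f g w : EuclideanSpace ℝ (Fin N) → ℝ} {x : EuclideanSpace ℝ (Fin N)}

lemma mcOp_congr (h : f =ᶠ[𝓝 x] g) : mcOp f x = mcOp g x := by
  refine Finset.sum_congr rfl fun i _ => ?_
  rw [EventuallyEq.fderiv_eq]
  filter_upwards [h.gradient] with y hy
  rw [hy]

lemma mcOp_eq_trace {L : EuclideanSpace ℝ (Fin N) →L[ℝ] EuclideanSpace ℝ (Fin N)}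
    (hL : HasFDerivAt (fun y => graphNormalize (∇ w y)) L x) :
    mcOp w x = LinearMap.trace ℝ (EuclideanSpace ℝ (Fin N)) L := by
  rw [LinearMap.trace_eq_sum_inner _ (EuclideanSpace.basisFun (Fin N) ℝ)]
  refine Finset.sum_congr rfl fun i _ => ?_
  have hcoord : HasFDerivAt (fun y => (√(1 + ‖∇ w y‖ ^ 2))⁻¹ * ∇ w y i)
      ((EuclideanSpace.proj i).comp L) x :=
    (EuclideanSpace.proj (𝕜 := ℝ) i).hasFDerivAt.comp x hL
  rw [hcoord.fderiv]
  simp [EuclideanSpace.inner_single_left]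

lemma mcOp_eq_trace_sub_inner (hw : ContDiffAt ℝ 2 w x) :
    mcOp w x = (√(1 + ‖∇ w x‖ ^ 2))⁻¹ *
      (LinearMap.trace ℝ (EuclideanSpace ℝ (Fin N)) (fderiv ℝ (∇ w) x) -
        ⟪graphNormalize (∇ w x), fderiv ℝ (∇ w) x (graphNormalize (∇ w x))⟫) := by
  have hD := (hasFDerivAt_graphNormalize (∇ w x)).comp x (differentiableAt_gradient hw).hasFDerivAt
  simp [mcOp_eq_trace hD, ← trace_rankOne_comp, ContinuousLinearMap.sub_comp,
    ContinuousLinearMap.smul_comp]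

lemma mcOp_le_mcOp_of_isLocalMax_sub (hf : ContDiffAt ℝ 2 f x) (hg : ContDiffAt ℝ 2 g x)
    (hmax : IsLocalMax (f - g) x) : mcOp f x ≤ mcOp g x := by
  have hgrad : ∇ f x = ∇ g x := congrArg (InnerProductSpace.toDual ℝ _).symm
    (fderiv_eq_of_isLocalMax_sub (hf.differentiableAt (by simp)) (hg.differentiableAt (by simp))
      hmax)
  let A := fderiv ℝ (∇ g) x - fderiv ℝ (∇ f) x
  have hA (u) : 0 ≤ ⟪u, A u⟫ := by
    have hle := fderiv_fderiv_le_of_isLocalMax_sub hf hg hmax u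
    rw [← inner_fderiv_gradient, ← inner_fderiv_gradient] at hle
    rw [real_inner_comm, sub_apply, inner_sub_left]
    exact sub_nonneg.2 hle
  have htrace := inner_le_trace_of_norm_le_one (A := A) hA (norm_graphNormalize_lt_one (∇ g x)).le
  rw [mcOp_eq_trace_sub_inner hf, mcOp_eq_trace_sub_inner hg, hgrad]
  refine mul_le_mul_of_nonneg_left ?_ (by positivity)
  simp only [A, ContinuousLinearMap.coe_coe, ContinuousLinearMap.toLinearMap_sub, map_sub,
    LinearMap.sub_apply, inner_sub_right] at htrace
  linarith

end MeanCurvature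

section LowerHemisphere

variable {F : Type*} [NormedAddCommGroup F] {x₀ x : F} {R : ℝ}

/-- The function whose graph is the lower hemisphere of radius `R` centered at `(x₀, -K)`.
Outside `closedBall x₀ R` its value is `-K`, since `√` vanishes on negative numbers. -/
noncomputable def lowerHemisphere (x₀ : F) (R K : ℝ) (x : F) : ℝ :=
  -K - √(R ^ 2 - ‖x - x₀‖ ^ 2)

lemma sq_sub_norm_sq_pos_of_mem_ball (hx : x ∈ ball x₀ R) : 0 < R ^ 2 - ‖x - x₀‖ ^ 2 :=
  sub_pos.2 (pow_lt_pow_left₀ (mem_ball_iff_norm.1 hx) (norm_nonneg _) two_ne_zero)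

lemma continuous_lowerHemisphere (x₀ : F) (R K : ℝ) : Continuous (lowerHemisphere x₀ R K) := by
  unfold lowerHemisphere
  fun_prop

variable [InnerProductSpace ℝ F]

lemma contDiffOn_lowerHemisphere (x₀ : F) (R K : ℝ) {n : WithTop ℕ∞} :
    ContDiffOn ℝ n (lowerHemisphere x₀ R K) (ball x₀ R) :=
  contDiffOn_const.sub <|
    (contDiffOn_const.sub ((contDiffOn_id.sub contDiffOn_const).norm_sq ℝ)).sqrt
      fun _ hx => (sq_sub_norm_sq_pos_of_mem_ball hx).ne'

lemma gradient_lowerHemisphere [CompleteSpace F] (K : ℝ) (hx : x ∈ ball x₀ R) :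
    ∇ (lowerHemisphere x₀ R K) x = (√(R ^ 2 - ‖x - x₀‖ ^ 2))⁻¹ • (x - x₀) := by
  have hpos := sq_sub_norm_sq_pos_of_mem_ball hx
  have hsqrt := ((((hasFDerivAt_id x).sub_const x₀).norm_sq.const_sub (R ^ 2)).sqrt
    hpos.ne').const_sub (-K)
  refine HasGradientAt.gradient (hasGradientAt_iff_hasFDerivAt.2 (hsqrt.congr_fderiv ?_))
  ext u
  simp only [id_eq, one_div, mul_inv_rev, map_sub, ContinuousLinearMap.comp_id, smul_neg, neg_neg,
    smul_apply, sub_apply, coe_innerSL_apply, nsmul_eq_mul, Nat.cast_ofNat, smul_eq_mul, map_smul,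
    InnerProductSpace.toDual_apply_apply]
  field_simp

lemma graphNormalize_gradient_lowerHemisphere [CompleteSpace F] (K : ℝ) (hx : x ∈ ball x₀ R) :
    graphNormalize (∇ (lowerHemisphere x₀ R K) x) = R⁻¹ • (x - x₀) := by
  have hR : 0 < R := pos_of_mem_ball hx
  have hpos := sq_sub_norm_sq_pos_of_mem_ball hx
  rw [gradient_lowerHemisphere K hx, graphNormalize]
  set s := √(R ^ 2 - ‖x - x₀‖ ^ 2)
  have hs : 0 < s := Real.sqrt_pos.2 hpos
  have hs_sq : s ^ 2 = R ^ 2 - ‖x - x₀‖ ^ 2 := Real.sq_sqrt hpos.le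
  have hW : 1 + ‖s⁻¹ • (x - x₀)‖ ^ 2 = (R / s) ^ 2 := by
    rw [norm_smul, mul_pow, norm_inv, inv_pow, Real.norm_eq_abs, sq_abs]
    field_simp
    linarith
  rw [hW, Real.sqrt_sq (by positivity), smul_smul]
  congr 1
  field_simp

lemma mcOp_lowerHemisphere {N : ℕ} {x₀ x : EuclideanSpace ℝ (Fin N)} (K : ℝ)
    (hx : x ∈ ball x₀ R) : mcOp (lowerHemisphere x₀ R K) x = N / R := by
  have hD : HasFDerivAt (fun y => graphNormalize (∇ (lowerHemisphere x₀ R K) y))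
      (R⁻¹ • ContinuousLinearMap.id ℝ (EuclideanSpace ℝ (Fin N))) x := by
    refine (((hasFDerivAt_id x).sub_const x₀).const_smul R⁻¹).congr_of_eventuallyEq ?_
    filter_upwards [isOpen_ball.mem_nhds hx] with y hy
    exact graphNormalize_gradient_lowerHemisphere K hy
  simp [mcOp_eq_trace hD, div_eq_inv_mul]

end LowerHemisphere

section ViscositySubsolution

lemma exists_contDiff_eventuallyEq {F G : Type*} [NormedAddCommGroup F] [NormedSpace ℝ F]
    [HasContDiffBump F] [NormedAddCommGroup G] [NormedSpace ℝ G] {n : ℕ∞} {U : Set F} {φ : F → G}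
    {x : F} (hU : IsOpen U) (hφ : ContDiffOn ℝ n φ U) (hx : x ∈ U) :
    ∃ ψ : F → G, ContDiff ℝ n ψ ∧ ψ =ᶠ[𝓝 x] φ := by
  obtain ⟨r, hr, hrU⟩ := nhds_basis_closedBall.mem_iff.1 (hU.mem_nhds hx)
  let b : ContDiffBump x := ⟨r / 2, r, half_pos hr, half_lt_self hr⟩
  refine ⟨fun y => b y • φ y, contMDiff_iff_contDiff.1 (contMDiff_of_tsupport fun y hy => ?_), ?_⟩
  · have hyU : y ∈ U := hrU (b.tsupport_eq ▸ tsupport_smul_subset_left b φ hy)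
    exact (b.contDiffAt.smul (hφ.contDiffAt (hU.mem_nhds hyU))).contMDiffAt
  · filter_upwards [b.eventuallyEq_one] with y hy
    simp [hy]

variable {N : ℕ} {U V : Set (EuclideanSpace ℝ (Fin N))} {H u v : EuclideanSpace ℝ (Fin N) → ℝ}

lemma isViscositySubsol_of_contDiffOn (hU : IsOpen U) (hu : ContDiffOn ℝ 2 u U)
    (h : ∀ x ∈ U, N * H x ≤ mcOp u x) : IsViscositySubsol U H u := by
  intro φ hφ x hx hmax
  have hUx := hU.mem_nhds hx
  exact (h x hx).trans <|
    mcOp_le_mcOp_of_isLocalMax_sub (hu.contDiffAt hUx) (hφ.contDiffAt hUx) (hmax.isLocalMax hUx)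

-- A test function on `U` need not extend to `V`, but its germ at the contact point does.
lemma IsViscositySubsol.mono (hv : IsViscositySubsol V H v) (hU : IsOpen U) (hUV : U ⊆ V) :
    IsViscositySubsol U H v := by
  intro φ hφ x hx hmax
  obtain ⟨ψ, hψ, hψφ⟩ := exists_contDiff_eventuallyEq (n := 2) hU hφ hx
  rw [← mcOp_congr hψφ]
  refine hv ψ hψ.contDiffOn x (hUV hx) (IsLocalMax.on ?_ V)
  have hsub : (fun y => v y - φ y) =ᶠ[𝓝 x] fun y => v y - ψ y := by
    filter_upwards [hψφ] with y hy
    rw [hy]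
  exact (hmax.isLocalMax (hU.mem_nhds hx)).congr hsub

lemma isLocalMaxOn_sub_of_le {X : Type*} [TopologicalSpace X] {s : Set X} {a m φ : X → ℝ} {x : X}
    (hmax : IsLocalMaxOn (fun y => m y - φ y) s x) (hle : a ≤ m) (hx : m x = a x) :
    IsLocalMaxOn (fun y => a y - φ y) s x := by
  filter_upwards [hmax] with y hy
  linarith [hle y]

lemma IsViscositySubsol.max (hu : IsViscositySubsol U H u) (hv : IsViscositySubsol U H v) :
    IsViscositySubsol U H fun x => max (u x) (v x) := by
  intro φ hφ x hx hmax
  rcases le_total (v x) (u x) with hvu | huv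
  · exact hu φ hφ x hx
      (isLocalMaxOn_sub_of_le hmax (fun y => le_max_left _ _) (max_eq_left hvu))
  · exact hv φ hφ x hx
      (isLocalMaxOn_sub_of_le hmax (fun y => le_max_right _ _) (max_eq_right huv))

lemma isViscositySubsol_lowerHemisphere {x₀ : EuclideanSpace ℝ (Fin N)} {R : ℝ}
    (hH : ∀ x ∈ ball x₀ R, H x ≤ 1 / R) (K : ℝ) :
    IsViscositySubsol (ball x₀ R) H (lowerHemisphere x₀ R K) := by
  refine isViscositySubsol_of_contDiffOn isOpen_ball (contDiffOn_lowerHemisphere x₀ R K)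
    fun x hx => ?_
  calc N * H x ≤ N * (1 / R) := by gcongr; exact hH x hx
    _ = mcOp (lowerHemisphere x₀ R K) x := by rw [mcOp_lowerHemisphere K hx, mul_one_div]

end ViscositySubsolution

theorem truncation_subsolution_general {N : ℕ} {H v : EuclideanSpace ℝ (Fin N) → ℝ}
    {x₀ : EuclideanSpace ℝ (Fin N)} {R : ℝ} (hv_usc : UpperSemicontinuousOn v (closedBall x₀ R))
    (hv : IsViscositySubsol (ball x₀ R) H v) (hHR : ∀ x ∈ ball x₀ R, H x ≤ 1 / R) (K : ℝ) :
    UpperSemicontinuousOn (fun x => max (v x) (lowerHemisphere x₀ R K x)) (closedBall x₀ R) ∧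
    IsViscositySubsol (ball x₀ R) H (fun x => max (v x) (lowerHemisphere x₀ R K x)) :=
  ⟨hv_usc.sup ((continuous_lowerHemisphere x₀ R K).upperSemicontinuous.upperSemicontinuousOn _),
    hv.max (isViscositySubsol_lowerHemisphere hHR K)⟩

/-- **Truncation preserves viscosity subsolutions**: truncating a viscosity
subsolution from below by the lower hemisphere `−K − √(R² − |x−x₀|²)` yields an
upper semicontinuous viscosity subsolution on the ball, provided `H ≤ 1/R`. -/
theorem truncation_subsolution {N : ℕ} (hN : 2 ≤ N)
    (Ω : Set (EuclideanSpace ℝ (Fin N))) (hΩo : IsOpen Ω) (hΩc : IsConnected Ω)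
    (H : EuclideanSpace ℝ (Fin N) → ℝ) (hH : LocLipschitzOn Ω H)
    (v : EuclideanSpace ℝ (Fin N) → ℝ)
    (hv_usc : UpperSemicontinuousOn v Ω) (hv : IsViscositySubsol Ω H v)
    (x₀ : EuclideanSpace ℝ (Fin N)) (hx₀ : x₀ ∈ Ω)
    (R : ℝ) (hR : 0 < R) (hball : closedBall x₀ R ⊆ Ω)
    (hHR : ∀ x ∈ closedBall x₀ R, H x ≤ 1 / R) (K : ℝ) :
    UpperSemicontinuousOn
      (fun x => max (v x) (-K - Real.sqrt (R ^ 2 - ‖x - x₀‖ ^ 2))) (closedBall x₀ R) ∧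
    IsViscositySubsol (ball x₀ R) H
      (fun x => max (v x) (-K - Real.sqrt (R ^ 2 - ‖x - x₀‖ ^ 2))) :=
  truncation_subsolution_general (hv_usc.mono hball)
    (hv.mono isOpen_ball (ball_subset_closedBall.trans hball))
    (fun x hx => hHR x (ball_subset_closedBall hx)) K
end

section
/- Strict comparison with a classical supersolution of the perturbed equation: Let N ≥ 2, let D be a bounded domain in ℝ^N, let Ω be an open set containing cl(D), and let H : Ω → ℝ be locally Lipschitz continuous. Let u : cl(D) → ℝ be lower semicontinuous on cl(D) and a viscosity supersolution of M(u) = NH in D, let δ > 0, and let w̃ ∈ C²(D) ∩ C(cl(D)) satisfy M(w̃) = N(H + δ) pointwise in D. If u > w̃ on ∂D, then u ≥ w̃ on cl(D). -/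
open Metric Set Filter Topology MeasureTheory

theorem le_on_closure_of_le_on_frontier_of_not_isLocalMin {X α : Type*} [TopologicalSpace X]
    [LinearOrder α] {D : Set X} {f : X → α} {c : α} (hD : IsCompact (closure D))
    (hf : LowerSemicontinuousOn f (closure D)) (hmin : ∀ x ∈ interior D, ¬ IsLocalMin f x)
    (hc : ∀ x ∈ frontier D, c ≤ f x) :
    ∀ x ∈ closure D, c ≤ f x := by
  intro x hx
  obtain ⟨x₀, hx₀, hx₀_min⟩ := hf.exists_isMinOn ⟨x, hx⟩ hD
  have hx₀_notMem : x₀ ∉ interior D := fun hx₀_int ↦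
    hmin x₀ hx₀_int <| hx₀_min.isLocalMin <|
      mem_of_superset (mem_interior_iff_mem_nhds.mp hx₀_int) subset_closure
  calc
    c ≤ f x₀ := hc x₀ ⟨hx₀, hx₀_notMem⟩
    _ ≤ f x := hx₀_min hx

theorem IsViscositySupersol.not_isLocalMinOn_sub {N : ℕ} {U : Set (EuclideanSpace ℝ (Fin N))}
    {H u φ : EuclideanSpace ℝ (Fin N) → ℝ} {x : EuclideanSpace ℝ (Fin N)}
    (hu : IsViscositySupersol U H u) (hφ : ContDiffOn ℝ 2 φ U) (hx : x ∈ U)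
    (hφ_strict : N * H x < mcOp φ x) :
    ¬ IsLocalMinOn (fun y ↦ u y - φ y) U x :=
  fun hmin ↦ (hu φ hφ x hx hmin).not_gt hφ_strict

-- The minimum of `u - w` cannot lie in `D`, where `w` itself is an admissible test function.
theorem strict_comparison_perturbed_general {N : ℕ} {D : Set (EuclideanSpace ℝ (Fin N))}
    (hDo : IsOpen D) (hDb : Bornology.IsBounded D) {H u w : EuclideanSpace ℝ (Fin N) → ℝ}
    (hu_lsc : LowerSemicontinuousOn u (closure D)) (hu : IsViscositySupersol D H u)
    (hw_c2 : ContDiffOn ℝ 2 w D) (hw_cont : ContinuousOn w (closure D))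
    (hw_strict : ∀ x ∈ D, N * H x < mcOp w x)
    (hbdry : ∀ x ∈ frontier D, w x ≤ u x) :
    ∀ x ∈ closure D, w x ≤ u x := by
  have hsub_lsc : LowerSemicontinuousOn (fun y ↦ u y - w y) (closure D) := by
    simpa only [sub_eq_add_neg, Pi.neg_apply] using hu_lsc.add hw_cont.neg.lowerSemicontinuousOn
  have hsub_min : ∀ x ∈ interior D, ¬ IsLocalMin (fun y ↦ u y - w y) x := by
    rw [hDo.interior_eq]
    exact fun x hx hmin ↦ hu.not_isLocalMinOn_sub hw_c2 hx (hw_strict x hx) (hmin.on D)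
  have hsub_nonneg : ∀ x ∈ closure D, 0 ≤ u x - w x :=
    le_on_closure_of_le_on_frontier_of_not_isLocalMin hDb.isCompact_closure hsub_lsc hsub_min
      fun x hx ↦ sub_nonneg.mpr (hbdry x hx)
  exact fun x hx ↦ sub_nonneg.mp (hsub_nonneg x hx)

/-- **Strict comparison with a classical supersolution of the perturbed equation**:
a viscosity supersolution of `M(u) = N H` dominates any classical solution of the
perturbed equation `M(w̃) = N (H + δ)`, `δ > 0`, that it strictly dominates on the
boundary. -/
theorem strict_comparison_perturbed {N : ℕ} (hN : 2 ≤ N)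
    (D : Set (EuclideanSpace ℝ (Fin N))) (hDo : IsOpen D) (hDc : IsConnected D)
    (hDb : Bornology.IsBounded D)
    (Ω : Set (EuclideanSpace ℝ (Fin N))) (hΩo : IsOpen Ω) (hDΩ : closure D ⊆ Ω)
    (H : EuclideanSpace ℝ (Fin N) → ℝ) (hH : LocLipschitzOn Ω H)
    (u : EuclideanSpace ℝ (Fin N) → ℝ)
    (hu_lsc : LowerSemicontinuousOn u (closure D)) (hu : IsViscositySupersol D H u)
    (δ : ℝ) (hδ : 0 < δ)
    (w : EuclideanSpace ℝ (Fin N) → ℝ)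
    (hw_c2 : ContDiffOn ℝ 2 w D) (hw_cont : ContinuousOn w (closure D))
    (hw_sol : ∀ x ∈ D, mcOp w x = N * (H x + δ))
    (hbdry : ∀ x ∈ frontier D, w x < u x) :
    ∀ x ∈ closure D, w x ≤ u x := by
  have hw_strict : ∀ x ∈ D, N * H x < mcOp w x := fun x hx ↦ by rw [hw_sol x hx]; gcongr; linarith
  exact strict_comparison_perturbed_general hDo hDb hu_lsc hu hw_c2 hw_cont hw_strict
    fun x hx ↦ (hbdry x hx).le
end
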